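/- Let H be a complex Hilbert space, W ⊆ H a closed subspace, B a bounded sesquilinear form on H that is inf-sup stable on W with constant α > 0 (and satisfies the transposed nondegeneracy on W). Let u ∈ H solve B u ψ = F ψ for all ψ ∈ H, where F is a bounded conjugate-linear functional, and let π : H → H be a bounded linear projection with ker π = W. Define G : W' → W as the Corrector Green's operator and K v = −G (B v ·). Then u = π u + K (π u) + G F, i.e. the exact solution decomposes into the interpolated part, its corrector, and a source corrector. -/

import Mathlib

/-- Abstract exact solution decomposition `u = π u + K (π u) + G F`: the exact
solution splits into its interpolation, the corrector of the interpolation, and the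
source corrector, by uniqueness of solutions of the corrector problem on `W`. -/
theorem exact_solution_decomposition
    {H : Type*} [NormedAddCommGroup H] [InnerProductSpace ℂ H] [CompleteSpace H]
    (W : Submodule ℂ H) (hWc : IsClosed (W : Set H))
    (B : H →ₗ[ℂ] H →ₗ⋆[ℂ] ℂ) (CB : ℝ)
    (hB : ∀ v w : H, ‖B v w‖ ≤ CB * ‖v‖ * ‖w‖)
    (α : ℝ) (hα : 0 < α)
    (hinfsupW : ∀ v ∈ W, α * ‖v‖ ≤ ⨆ w : W, ‖B v w‖ / ‖(w : H)‖)
    (htransW : ∀ w ∈ W, w ≠ 0 → ∃ v ∈ W, B v w ≠ 0)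
    (π : H →L[ℂ] H)
    (hproj : ∀ u : H, π (π u) = π u)
    (hker : ∀ u : H, π u = 0 ↔ u ∈ W)
    (F : H →L⋆[ℂ] ℂ)
    (u : H) (hu : ∀ ψ : H, B u ψ = F ψ)
    (GF : H) (hGFW : GF ∈ W) (hGF : ∀ w ∈ W, B GF w = F w)
    (Kπu : H) (hKW : Kπu ∈ W) (hK : ∀ w ∈ W, B Kπu w = - B (π u) w) :
    u = π u + Kπu + GF := by
  have hz : ∀ v ∈ W, (∀ w ∈ W, B v w = 0) → v = 0 := by
    intro v hv h
    have h1 := hinfsupW v hv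
    have h2 : (⨆ w : W, ‖B v w‖ / ‖(w : H)‖) = 0 := by
      have h3 : ∀ w : W, ‖B v w‖ / ‖(w : H)‖ = 0 := fun w => by
        rw [h w w.2, norm_zero, zero_div]
      simp only [h3, ciSup_const]
    rw [h2] at h1
    have h4 : ‖v‖ ≤ 0 := by
      by_contra hc
      push Not at hc
      have := mul_pos hα hc
      linarith
    exact norm_le_zero_iff.mp h4
  have huW : u - π u ∈ W := by
    rw [← hker, map_sub, hproj, sub_self]
  have key : u - π u - Kπu - GF = 0 := by
    apply hz _ (W.sub_mem (W.sub_mem huW hKW) hGFW)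
    intro w hw
    simp only [map_sub, LinearMap.sub_apply, hu, hK w hw, hGF w hw]
    ring
  rw [← sub_eq_zero, ← key]
  abel
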